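/- Consider the two-period time-dependent quantum walk on ℤ whose coin sequence is U_{2s} = H₀ and U_{2s+1} = H₁ (s = 0,1,2,...), where H₀ = [[a₀,b₀],[c₀,d₀]] and H₁ = [[a₁,b₁],[c₁,d₁]] are real orthogonal 2×2 matrices all of whose entries are nonzero. If det(H₁H₀) < 0, then X_t/t converges weakly as t → ∞ to a random variable Z whose law is absolutely continuous with density f(x) = f_K(x; a₀a₁) · [1 − (|α|² − |β|² + ((α·conj(β) + conj(α)·β)·b₀)/a₀)·x]. -/

import Mathlib

open MeasureTheory Complex Filter

noncomputable section

/-- The Konno density function `f_K(x; a)`; only `|a|` matters. -/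
def konnoDensity (a x : ℝ) : ℝ :=
  if |x| < |a| then
    Real.sqrt (1 - |a| ^ 2) / (Real.pi * (1 - x ^ 2) * Real.sqrt (|a| ^ 2 - x ^ 2))
  else 0

/-- Time evolution of a time-dependent discrete-time quantum walk on `ℤ`:
`ψ_{t+1}(x) = P_t ψ_t(x+1) + Q_t ψ_t(x-1)`, where `P_t`/`Q_t` are the top/bottom
row parts of the coin `U t`. -/
def QWEvolves (U : ℕ → Matrix (Fin 2) (Fin 2) ℂ) (ψ : ℕ → ℤ → Fin 2 → ℂ) : Prop :=
  ∀ t : ℕ, ∀ x : ℤ,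
    ψ (t + 1) x 0 = U t 0 0 * ψ t (x + 1) 0 + U t 0 1 * ψ t (x + 1) 1 ∧
    ψ (t + 1) x 1 = U t 1 0 * ψ t (x - 1) 0 + U t 1 1 * ψ t (x - 1) 1

/-- Initial state `ψ₀(0) = ᵀ(α, β)`, `ψ₀(x) = 0` for `x ≠ 0`. -/
def QWInit (α β : ℂ) (ψ : ℕ → ℤ → Fin 2 → ℂ) : Prop :=
  ψ 0 0 0 = α ∧ ψ 0 0 1 = β ∧ ∀ x : ℤ, x ≠ 0 → (ψ 0 x 0 = 0 ∧ ψ 0 x 1 = 0)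

/-- `P(X_t = x) = ‖ψ_t(x)‖²`. -/
def qwProb (ψ : ℕ → ℤ → Fin 2 → ℂ) (t : ℕ) (x : ℤ) : ℝ :=
  Complex.normSq (ψ t x 0) + Complex.normSq (ψ t x 1)

/-- The law of `X_t / t`: `μ_t = Σ_{x ∈ ℤ} P(X_t = x) δ_{x/t}`. -/
def qwMeasure (ψ : ℕ → ℤ → Fin 2 → ℂ) (t : ℕ) : Measure ℝ :=
  Measure.sum fun x : ℤ => ENNReal.ofReal (qwProb ψ t x) • Measure.dirac ((x : ℝ) / (t : ℝ))

/-- Weak convergence of `X_t / t` to the law with density `f`. -/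
def qwWeakLimit (ψ : ℕ → ℤ → Fin 2 → ℂ) (f : ℝ → ℝ) : Prop :=
  ∀ g : BoundedContinuousFunction ℝ ℝ,
    Tendsto (fun t : ℕ => ∫ y, g y ∂ qwMeasure ψ t) atTop (nhds (∫ y, g y * f y))

/-- `R(k) = diag(e^{ik}, e^{-ik})`. -/
def Rmat (k : ℝ) : Matrix (Fin 2) (Fin 2) ℂ :=
  !![Complex.exp (Complex.I * k), 0; 0, Complex.exp (-(Complex.I * k))]

/-!
By Parseval, the characteristic function of `X_t / t` at `ξ` is the average over the momentum `k`
of the overlap of the Fourier transformed state at `k` with the one at `k - ξ / t`. In momentum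
space two steps of the walk are multiplication by a unitary matrix `M k` with determinant `-1` and
trace `2 i a₀ a₁ sin 2k`. Hence `M k = cos θ • J + (i sin θ) • 1` for a reflection `J`, with
`sin θ = a₀ a₁ sin 2k`, and the eigenvalues of `M k` are `exp (iθ)` and `exp (i(π - θ))`. In the
overlap the two eigenmodes decouple as `t → ∞`, and each picks up the phase `± ξ V` of its group
velocity, where `V` is half the derivative of `θ` in `k`; the limit is
`cos (ξ V) - i sin (ξ V) ⟪v, J v⟫` for the initial spin `v`.

The change of variables `x = V` turns the uniform average over momenta into the Konno density.
Of the three parts of `⟪v, J v⟫`, one is a multiple `c V` of the velocity, and the other two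
contribute nothing to the average by symmetry in `k`. Adding further terms that average to zero
turns the limit into `(1 - c V) exp (i ξ V)`, which gives the factor `1 - c x` of the density.
-/

open scoped Real Topology ComplexConjugate InnerProductSpace

/-! ### The Konno distribution -/

section Konno

/-- The group velocity, at quasi-momentum `φ`, of the dispersion relation `sin θ = a sin φ`. -/
def konnoVelocity (a φ : ℝ) : ℝ :=
  a * Real.cos φ / √(1 - (a * Real.sin φ) ^ 2)

variable {a : ℝ}

lemma konnoDensity_nonneg (a x : ℝ) : 0 ≤ konnoDensity a x := by
  unfold konnoDensity
  split_ifs with hx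
  · rcases le_or_gt (1 - |a| ^ 2) 0 with ha | ha
    · rw [Real.sqrt_eq_zero_of_nonpos ha, zero_div]
    · have hx1 : 0 < 1 - x ^ 2 := by linarith [sq_lt_sq.2 hx, sq_abs a]
      positivity
  · exact le_rfl

lemma measurable_konnoDensity (a : ℝ) : Measurable (konnoDensity a) := by
  unfold konnoDensity
  refine Measurable.ite (measurableSet_lt (by fun_prop) measurable_const) ?_ measurable_const
  fun_prop

lemma one_sub_mul_sin_sq_pos (ha : a ^ 2 < 1) (φ : ℝ) : 0 < 1 - (a * Real.sin φ) ^ 2 := by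
  rw [mul_pow]
  nlinarith [Real.sin_sq_le_one φ, sq_nonneg a]

lemma sqrt_one_sub_mul_sin_sq_pos (ha : a ^ 2 < 1) (φ : ℝ) : 0 < √(1 - (a * Real.sin φ) ^ 2) :=
  Real.sqrt_pos.2 (one_sub_mul_sin_sq_pos ha φ)

lemma konnoVelocity_neg (a φ : ℝ) : konnoVelocity a (-φ) = konnoVelocity a φ := by
  rw [konnoVelocity, konnoVelocity, Real.cos_neg, Real.sin_neg, mul_neg, neg_sq]

lemma konnoVelocity_add_pi (a φ : ℝ) : konnoVelocity a (φ + π) = -konnoVelocity a φ := by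
  rw [konnoVelocity, konnoVelocity, Real.cos_add_pi, Real.sin_add_pi, mul_neg, mul_neg, neg_sq,
    neg_div]

lemma konnoVelocity_sq (ha : a ^ 2 < 1) (φ : ℝ) :
    konnoVelocity a φ ^ 2 = (a * Real.cos φ) ^ 2 / (1 - (a * Real.sin φ) ^ 2) := by
  rw [konnoVelocity, div_pow, Real.sq_sqrt (one_sub_mul_sin_sq_pos ha φ).le]

lemma one_sub_konnoVelocity_sq (ha : a ^ 2 < 1) (φ : ℝ) :
    1 - konnoVelocity a φ ^ 2 = (1 - a ^ 2) / (1 - (a * Real.sin φ) ^ 2) := by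
  rw [konnoVelocity_sq ha, one_sub_div (one_sub_mul_sin_sq_pos ha φ).ne']
  congr 1
  linear_combination -a ^ 2 * Real.sin_sq_add_cos_sq φ

lemma sq_sub_konnoVelocity_sq (ha : a ^ 2 < 1) (φ : ℝ) :
    a ^ 2 - konnoVelocity a φ ^ 2 =
      (a * Real.sin φ) ^ 2 * (1 - a ^ 2) / (1 - (a * Real.sin φ) ^ 2) := by
  have h := (one_sub_mul_sin_sq_pos ha φ).ne'
  rw [konnoVelocity_sq ha, eq_div_iff h, sub_mul, div_mul_cancel₀ _ h]
  linear_combination -a ^ 2 * Real.sin_sq_add_cos_sq φ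

lemma hasDerivAt_konnoVelocity (ha : a ^ 2 < 1) (φ : ℝ) :
    HasDerivAt (konnoVelocity a)
      (-(a * Real.sin φ * (1 - a ^ 2) / √(1 - (a * Real.sin φ) ^ 2) ^ 3)) φ := by
  have h := one_sub_mul_sin_sq_pos ha φ
  have hC := sqrt_one_sub_mul_sin_sq_pos ha φ
  have hsqrt := ((((Real.hasDerivAt_sin φ).const_mul a).fun_pow 2).const_sub 1).sqrt h.ne'
  refine (((Real.hasDerivAt_cos φ).const_mul a).fun_div hsqrt hC.ne').congr_deriv ?_
  have hsq := Real.sq_sqrt h.le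
  generalize √(1 - (a * Real.sin φ) ^ 2) = C at *
  field_simp
  rw [hsq, Real.cos_sq']
  ring

lemma continuous_konnoVelocity (ha : a ^ 2 < 1) : Continuous (konnoVelocity a) :=
  continuous_iff_continuousAt.2 fun φ => (hasDerivAt_konnoVelocity ha φ).continuousAt

lemma cos_eq_of_konnoVelocity (ha : a ^ 2 < 1) (h0 : a ≠ 0) (φ : ℝ) :
    Real.cos φ =
      konnoVelocity a φ * √(1 - a ^ 2) / (a * √(1 - konnoVelocity a φ ^ 2)) := by
  have hC := sqrt_one_sub_mul_sin_sq_pos ha φ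
  have hD : 0 < √(1 - a ^ 2) := Real.sqrt_pos.2 (sub_pos.2 ha)
  rw [one_sub_konnoVelocity_sq ha, Real.sqrt_div (sub_pos.2 ha).le, konnoVelocity]
  generalize √(1 - (a * Real.sin φ) ^ 2) = C at *
  field_simp

lemma injOn_konnoVelocity (ha : a ^ 2 < 1) (h0 : a ≠ 0) :
    Set.InjOn (konnoVelocity a) (Set.Icc 0 π) := fun φ hφ φ' hφ' h =>
  Real.injOn_cos hφ hφ' <| by
    rw [cos_eq_of_konnoVelocity ha h0 φ, cos_eq_of_konnoVelocity ha h0 φ', h]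

lemma abs_konnoVelocity_lt (ha : a ^ 2 < 1) (h0 : a ≠ 0) {φ : ℝ} (hφ : φ ∈ Set.Ioo 0 π) :
    |konnoVelocity a φ| < |a| := by
  have hs := Real.sin_pos_of_mem_Ioo hφ
  have h := one_sub_mul_sin_sq_pos ha φ
  have : 0 < 1 - a ^ 2 := sub_pos.2 ha
  rw [← sq_lt_sq, ← sub_pos, sq_sub_konnoVelocity_sq ha]
  positivity

lemma exists_konnoVelocity_eq (ha : a ^ 2 < 1) {x : ℝ} (hx : |x| < |a|) :
    ∃ φ ∈ Set.Ioo 0 π, konnoVelocity a φ = x := by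
  have h0 : a ≠ 0 := abs_pos.1 ((abs_nonneg x).trans_lt hx)
  have hx2 : x ^ 2 < a ^ 2 := sq_lt_sq.2 hx
  have h1 : 0 < 1 - a ^ 2 := sub_pos.2 ha
  have h2 : 0 < 1 - x ^ 2 := by linarith
  set u := x * √(1 - a ^ 2) / (a * √(1 - x ^ 2)) with hu
  have hu2 : u ^ 2 = x ^ 2 * (1 - a ^ 2) / (a ^ 2 * (1 - x ^ 2)) := by
    rw [hu, div_pow, mul_pow, mul_pow, Real.sq_sqrt h1.le, Real.sq_sqrt h2.le]
  have hu1 : |u| < 1 := by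
    rw [← sq_lt_one_iff_abs_lt_one, hu2, div_lt_one (by positivity)]
    linarith
  obtain ⟨hul, hur⟩ := abs_lt.1 hu1
  refine ⟨Real.arccos u, ⟨Real.arccos_pos.2 hur, ?_⟩, ?_⟩
  · exact (Real.arccos_le_pi u).lt_of_ne fun h => hul.not_ge (Real.arccos_eq_pi.1 h)
  · have hsin : 1 - (a * Real.sin (Real.arccos u)) ^ 2 = (1 - a ^ 2) / (1 - x ^ 2) := by
      rw [Real.sin_arccos, mul_pow, Real.sq_sqrt (by nlinarith), hu2]
      field_simp
      ring
    rw [konnoVelocity, hsin, Real.cos_arccos hul.le hur.le, Real.sqrt_div h1.le, hu]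
    have := Real.sqrt_pos.2 h1
    have := Real.sqrt_pos.2 h2
    field_simp

lemma image_konnoVelocity (ha : a ^ 2 < 1) (h0 : a ≠ 0) :
    konnoVelocity a '' Set.Ioo 0 π = {x | |x| < |a|} :=
  Set.Subset.antisymm (Set.image_subset_iff.2 fun _ hφ => abs_konnoVelocity_lt ha h0 hφ)
    fun _ hx => exists_konnoVelocity_eq ha hx

lemma abs_deriv_mul_konnoDensity (ha : a ^ 2 < 1) (h0 : a ≠ 0) {φ : ℝ} (hφ : φ ∈ Set.Ioo 0 π) :
    |deriv (konnoVelocity a) φ| * konnoDensity a (konnoVelocity a φ) = π⁻¹ := by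
  have hs := Real.sin_pos_of_mem_Ioo hφ
  have h := one_sub_mul_sin_sq_pos ha φ
  have hC := sqrt_one_sub_mul_sin_sq_pos ha φ
  have h1 : 0 < 1 - a ^ 2 := sub_pos.2 ha
  have := Real.sqrt_pos.2 h1
  have := abs_pos.2 h0
  rw [(hasDerivAt_konnoVelocity ha φ).deriv, abs_neg, konnoDensity,
    if_pos (abs_konnoVelocity_lt ha h0 hφ), sq_abs, one_sub_konnoVelocity_sq ha,
    sq_sub_konnoVelocity_sq ha, Real.sqrt_div (by positivity), Real.sqrt_mul (by positivity),
    Real.sqrt_sq_eq_abs, abs_div, abs_mul, abs_mul, abs_of_pos hs, abs_of_pos h1,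
    abs_of_pos (pow_pos hC 3)]
  nth_rewrite 2 [← Real.sq_sqrt h.le]
  generalize √(1 - (a * Real.sin φ) ^ 2) = C at *
  field_simp

lemma integral_konnoDensity_smul {E : Type*} [NormedAddCommGroup E] [NormedSpace ℝ E]
    (ha : a ^ 2 < 1) (h0 : a ≠ 0) (G : ℝ → E) :
    ∫ x, konnoDensity a x • G x = π⁻¹ • ∫ φ in 0..π, G (konnoVelocity a φ) := by
  calc ∫ x, konnoDensity a x • G x
      = ∫ x in {x | |x| < |a|}, konnoDensity a x • G x := by
        refine (setIntegral_eq_integral_of_forall_compl_eq_zero fun x hx => ?_).symm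
        rw [konnoDensity, if_neg (by exact hx), zero_smul]
    _ = ∫ φ in Set.Ioo 0 π, |deriv (konnoVelocity a) φ| •
          konnoDensity a (konnoVelocity a φ) • G (konnoVelocity a φ) := by
        rw [← image_konnoVelocity ha h0]
        exact integral_image_eq_integral_abs_deriv_smul measurableSet_Ioo
          (fun φ _ => (hasDerivAt_konnoVelocity ha φ).differentiableAt.hasDerivAt.hasDerivWithinAt)
          ((injOn_konnoVelocity ha h0).mono Set.Ioo_subset_Icc_self) _
    _ = ∫ φ in Set.Ioo 0 π, π⁻¹ • G (konnoVelocity a φ) :=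
        setIntegral_congr_fun measurableSet_Ioo fun φ hφ => by
          rw [smul_smul, abs_deriv_mul_konnoDensity ha h0 hφ]
    _ = π⁻¹ • ∫ φ in 0..π, G (konnoVelocity a φ) := by
        rw [integral_smul, intervalIntegral.integral_of_le Real.pi_pos.le,
          integral_Ioc_eq_integral_Ioo]

end Konno

/-! ### Fourier series on the lattice -/

section LatticeFourier

/-- The Fourier series `û(k) = ∑ₓ e^{-ikx} u(x)` of a function `u` on `ℤ`, with values in a complex
normed space. It is used for finitely supported `u`, so that convergence plays no role. -/
def latticeFourier {E : Type*} [NormedAddCommGroup E] [NormedSpace ℂ E] (u : ℤ → E) (k : ℝ) : E :=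
  ∑' x : ℤ, cexp (-(I * k * x)) • u x

variable {E F : Type*} [NormedAddCommGroup E] [NormedSpace ℂ E] [NormedAddCommGroup F]
  [NormedSpace ℂ F] {u v : ℤ → E}

lemma summable_exp_smul (hu : u.HasFiniteSupport) (k : ℝ) :
    Summable fun x : ℤ => cexp (-(I * k * x)) • u x :=
  summable_of_hasFiniteSupport (hu.smul_right _)

lemma latticeFourier_eq_sum {s : Finset ℤ} (hs : u.support ⊆ s) (k : ℝ) :
    latticeFourier u k = ∑ x ∈ s, cexp (-(I * k * x)) • u x :=
  tsum_eq_sum' ((Function.support_smul_subset_right _ _).trans hs)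

lemma continuous_latticeFourier (hu : u.HasFiniteSupport) : Continuous (latticeFourier u) := by
  obtain ⟨s, hs⟩ := Set.Finite.exists_finset_coe hu
  rw [funext (latticeFourier_eq_sum hs.ge)]
  fun_prop

lemma latticeFourier_of_support_subset_zero (hu : ∀ x ≠ 0, u x = 0) (k : ℝ) :
    latticeFourier u k = u 0 := by
  rw [latticeFourier, tsum_eq_single 0 fun x hx => by rw [hu x hx, smul_zero]]
  simp

lemma latticeFourier_fun_add (hu : u.HasFiniteSupport) (hv : v.HasFiniteSupport) (k : ℝ) :
    latticeFourier (fun x => u x + v x) k = latticeFourier u k + latticeFourier v k := by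
  simp_rw [latticeFourier, smul_add]
  exact (summable_exp_smul hu k).tsum_add (summable_exp_smul hv k)

lemma latticeFourier_comp_clm (L : E →L[ℂ] F) (hu : u.HasFiniteSupport) (k : ℝ) :
    latticeFourier (fun x => L (u x)) k = L (latticeFourier u k) := by
  simp_rw [latticeFourier, L.map_tsum (summable_exp_smul hu k), map_smul]

lemma latticeFourier_comp_add_const (u : ℤ → E) (n : ℤ) (k : ℝ) :
    latticeFourier (fun x => u (x + n)) k = cexp (I * k * n) • latticeFourier u k := by
  rw [latticeFourier, latticeFourier, ← (Equiv.addRight n).tsum_eq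
    (fun x : ℤ => cexp (-(I * k * x)) • u x), ← tsum_const_smul'']
  refine tsum_congr fun x => ?_
  rw [Equiv.coe_addRight, smul_smul, ← Complex.exp_add]
  congr 2
  push_cast
  ring

lemma latticeFourier_sub (u : ℤ → E) (k s : ℝ) :
    latticeFourier u (k - s) = latticeFourier (fun x => cexp (I * s * x) • u x) k := by
  refine tsum_congr fun x => ?_
  rw [smul_smul, ← Complex.exp_add]
  congr 2
  push_cast
  ring

lemma integral_exp_I_mul_int (n : ℤ) :
    ∫ k in -π..π, cexp (I * n * k) = if n = 0 then 2 * (π : ℂ) else 0 := by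
  split_ifs with hn
  · simp [hn, two_mul]
  · have hperiod : cexp (I * n * (π : ℝ)) = cexp (I * n * ((-π : ℝ) : ℂ)) := by
      refine Complex.exp_eq_exp_iff_exists_int.2 ⟨n, ?_⟩
      push_cast
      ring
    rw [integral_exp_mul_complex (mul_ne_zero I_ne_zero (Int.cast_ne_zero.2 hn)), hperiod,
      sub_self, zero_div]

end LatticeFourier

section Parseval

variable {E : Type*} [NormedAddCommGroup E] [InnerProductSpace ℂ E] {u v : ℤ → E}

lemma inner_exp_smul_exp_smul (k : ℝ) (x y : ℤ) (v w : E) :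
    ⟪cexp (-(I * k * x)) • v, cexp (-(I * k * y)) • w⟫_ℂ =
      cexp (I * (x - y : ℤ) * k) * ⟪v, w⟫_ℂ := by
  rw [inner_smul_left, inner_smul_right, ← Complex.exp_conj, ← mul_assoc, ← Complex.exp_add]
  congr 2
  simp only [map_neg, map_mul, conj_I, conj_ofReal, map_intCast]
  push_cast
  ring

lemma integral_inner_latticeFourier (hu : u.HasFiniteSupport) (hv : v.HasFiniteSupport) :
    ∫ k in -π..π, ⟪latticeFourier u k, latticeFourier v k⟫_ℂ = 2 * π * ∑' x, ⟪u x, v x⟫_ℂ := by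
  obtain ⟨s, hs⟩ := (Set.Finite.union hu hv).exists_finset_coe
  have hus : u.support ⊆ s := hs ▸ Set.subset_union_left
  have hvs : v.support ⊆ s := hs ▸ Set.subset_union_right
  have hsum : (fun x => ⟪u x, v x⟫_ℂ).support ⊆ s := fun x hx =>
    hus fun h => hx (by simp only [h, inner_zero_left])
  have hint (x y : ℤ) : IntervalIntegrable
      (fun k : ℝ => cexp (I * (x - y : ℤ) * k) * ⟪u x, v y⟫_ℂ) volume (-π) π :=
    Continuous.intervalIntegrable (by fun_prop) _ _
  simp_rw [latticeFourier_eq_sum hus, latticeFourier_eq_sum hvs, sum_inner, inner_sum,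
    inner_exp_smul_exp_smul]
  rw [intervalIntegral.integral_finsetSum
      fun x _ => Continuous.intervalIntegrable (by fun_prop) _ _,
    tsum_eq_sum' hsum, Finset.mul_sum]
  refine Finset.sum_congr rfl fun x hx => ?_
  rw [intervalIntegral.integral_finsetSum fun y _ => hint x y]
  simp_rw [intervalIntegral.integral_mul_const, integral_exp_I_mul_int, sub_eq_zero, ite_mul,
    zero_mul]
  rw [Finset.sum_ite_eq, if_pos hx]

lemma integral_inner_latticeFourier_sub (hu : u.HasFiniteSupport) (s : ℝ) :
    ∫ k in -π..π, ⟪latticeFourier u k, latticeFourier u (k - s)⟫_ℂ =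
      2 * π * ∑' x : ℤ, cexp (I * s * x) * ‖u x‖ ^ 2 := by
  simp_rw [latticeFourier_sub]
  refine (integral_inner_latticeFourier hu
    (hu.smul_right fun x : ℤ => cexp (I * s * x))).trans ?_
  simp_rw [Pi.smul_apply', inner_smul_right, inner_self_eq_norm_sq_to_K]
  rfl

end Parseval

/-! ### The walk in momentum space -/

/-- The space `ℂ²` of internal states of the walker, with its Euclidean inner product. -/
abbrev CoinSpace : Type := EuclideanSpace ℂ (Fin 2)

/-- The operator on `CoinSpace` defined by a `2 × 2` matrix, as an isomorphism of ⋆-algebras. -/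
abbrev coinOp : Matrix (Fin 2) (Fin 2) ℂ ≃⋆ₐ[ℂ] (CoinSpace →L[ℂ] CoinSpace) :=
  Matrix.toEuclideanCLM (n := Fin 2) (𝕜 := ℂ)

/-- The amplitude `ψ_t`, with values in the inner product space `CoinSpace`. -/
def qwState (ψ : ℕ → ℤ → Fin 2 → ℂ) (t : ℕ) (x : ℤ) : CoinSpace :=
  WithLp.toLp 2 (ψ t x)

/-- The spatial Fourier transform of `ψ_t`. -/
def qwFourier (ψ : ℕ → ℤ → Fin 2 → ℂ) (t : ℕ) : ℝ → CoinSpace :=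
  latticeFourier (qwState ψ t)

lemma coinOp_mem_unitary {M : Matrix (Fin 2) (Fin 2) ℂ} (hM : M ∈ Matrix.unitaryGroup (Fin 2) ℂ) :
    coinOp M ∈ unitary (CoinSpace →L[ℂ] CoinSpace) :=
  Unitary.map_mem coinOp hM

lemma Rmat_mem_unitaryGroup (k : ℝ) : Rmat k ∈ Matrix.unitaryGroup (Fin 2) ℂ := by
  rw [Matrix.mem_unitaryGroup_iff']
  ext i j
  fin_cases i <;> fin_cases j <;>
    simp [Rmat, Matrix.star_eq_conjTranspose, Matrix.mul_apply, ← Complex.exp_conj,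
      ← Complex.exp_add]

lemma Rmat_eq_smul_add_smul (k : ℝ) :
    Rmat k = cexp (I * k) • !![1, 0; 0, 0] + cexp (-(I * k)) • !![0, 0; 0, 1] := by
  simp [Rmat]

lemma qwProb_eq_norm_sq (ψ : ℕ → ℤ → Fin 2 → ℂ) (t : ℕ) (x : ℤ) :
    qwProb ψ t x = ‖qwState ψ t x‖ ^ 2 := by
  simp only [qwProb, qwState, EuclideanSpace.norm_sq_eq, Fin.sum_univ_two, normSq_eq_norm_sq]

section Walk

variable {U : ℕ → Matrix (Fin 2) (Fin 2) ℂ} {ψ : ℕ → ℤ → Fin 2 → ℂ} {α β : ℂ}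

lemma QWInit.qwState_zero (hinit : QWInit α β ψ) : qwState ψ 0 0 = !₂[α, β] := by
  ext j
  fin_cases j
  · exact hinit.1
  · exact hinit.2.1

lemma QWInit.qwState_eq_zero (hinit : QWInit α β ψ) {x : ℤ} (hx : x ≠ 0) :
    qwState ψ 0 x = 0 := by
  ext j
  fin_cases j
  · exact (hinit.2.2 x hx).1
  · exact (hinit.2.2 x hx).2

lemma QWInit.qwFourier_zero (hinit : QWInit α β ψ) (k : ℝ) : qwFourier ψ 0 k = !₂[α, β] := by
  rw [qwFourier, latticeFourier_of_support_subset_zero (fun _ => hinit.qwState_eq_zero),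
    hinit.qwState_zero]

lemma QWEvolves.qwState_succ (hevol : QWEvolves U ψ) (t : ℕ) :
    qwState ψ (t + 1) = fun x => coinOp (!![1, 0; 0, 0] * U t) (qwState ψ t (x + 1)) +
      coinOp (!![0, 0; 0, 1] * U t) (qwState ψ t (x + -1)) := by
  ext x j
  obtain ⟨h0, h1⟩ := hevol t x
  fin_cases j
  · simpa [qwState, Matrix.toEuclideanCLM_toLp, Matrix.vecMul, dotProduct] using h0
  · simpa [qwState, Matrix.toEuclideanCLM_toLp, Matrix.vecMul, dotProduct,
      ← sub_eq_add_neg] using h1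

lemma QWEvolves.hasFiniteSupport_qwState (hinit : QWInit α β ψ) (hevol : QWEvolves U ψ) (t : ℕ) :
    (qwState ψ t).HasFiniteSupport := by
  induction t with
  | zero =>
    refine (Set.finite_singleton 0).subset fun x hx => ?_
    exact by_contra fun h => hx (hinit.qwState_eq_zero h)
  | succ t ih =>
    have hshift (M : Matrix (Fin 2) (Fin 2) ℂ) (n : ℤ) :
        (fun x => coinOp M (qwState ψ t (x + n))).HasFiniteSupport :=
      (ih.fun_comp_of_injective (add_left_injective n)).fun_comp (map_zero (coinOp M))
    rw [hevol.qwState_succ]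
    exact (hshift _ 1).fun_add (hshift _ (-1))

lemma QWEvolves.qwFourier_succ (hinit : QWInit α β ψ) (hevol : QWEvolves U ψ) (t : ℕ) (k : ℝ) :
    qwFourier ψ (t + 1) k = coinOp (Rmat k * U t) (qwFourier ψ t k) := by
  have hfin := hevol.hasFiniteSupport_qwState hinit t
  have hshift (n : ℤ) : (fun x => qwState ψ t (x + n)).HasFiniteSupport :=
    hfin.fun_comp_of_injective (add_left_injective n)
  have hop (M : Matrix (Fin 2) (Fin 2) ℂ) (n : ℤ) :
      (fun x => coinOp M (qwState ψ t (x + n))).HasFiniteSupport :=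
    (hshift n).fun_comp (map_zero (coinOp M))
  rw [qwFourier, hevol.qwState_succ, latticeFourier_fun_add (hop _ 1) (hop _ (-1)),
    latticeFourier_comp_clm _ (hshift 1), latticeFourier_comp_clm _ (hshift (-1)),
    latticeFourier_comp_add_const, latticeFourier_comp_add_const, Rmat_eq_smul_add_smul, add_mul,
    smul_mul_assoc, smul_mul_assoc, map_add, map_smul, map_smul, map_smul, map_smul]
  simp [qwFourier]

lemma QWEvolves.continuous_qwFourier (hinit : QWInit α β ψ) (hevol : QWEvolves U ψ) (t : ℕ) :
    Continuous (qwFourier ψ t) :=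
  continuous_latticeFourier (hevol.hasFiniteSupport_qwState hinit t)

lemma QWEvolves.norm_qwFourier (hU : ∀ t, U t ∈ Matrix.unitaryGroup (Fin 2) ℂ)
    (hinit : QWInit α β ψ) (hevol : QWEvolves U ψ) (t : ℕ) (k : ℝ) :
    ‖qwFourier ψ t k‖ = ‖(!₂[α, β] : CoinSpace)‖ := by
  induction t with
  | zero => rw [hinit.qwFourier_zero]
  | succ t ih =>
    rw [hevol.qwFourier_succ hinit, ContinuousLinearMap.norm_map_of_mem_unitary
      (coinOp_mem_unitary (mul_mem (Rmat_mem_unitaryGroup k) (hU t))), ih]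

lemma QWEvolves.charFun_qwMeasure (hinit : QWInit α β ψ) (hevol : QWEvolves U ψ) (t : ℕ) (ξ : ℝ) :
    charFun (qwMeasure ψ t) ξ =
      (2 * π : ℂ)⁻¹ * ∫ k in -π..π, ⟪qwFourier ψ t k, qwFourier ψ t (k - ξ / t)⟫_ℂ := by
  simp_rw [qwFourier]
  rw [integral_inner_latticeFourier_sub (hevol.hasFiniteSupport_qwState hinit t),
    inv_mul_cancel_left₀ (by simp [Real.pi_ne_zero]), charFun_apply_real, qwMeasure,
    integral_sum_dirac (by simp)]
  refine tsum_congr fun x => ?_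
  rw [qwProb_eq_norm_sq, ENNReal.toReal_ofReal (sq_nonneg _), Complex.real_smul, mul_comm]
  push_cast
  congr 2
  ring

lemma QWEvolves.isProbabilityMeasure_qwMeasure (hU : ∀ t, U t ∈ Matrix.unitaryGroup (Fin 2) ℂ)
    (hv : ‖(!₂[α, β] : CoinSpace)‖ = 1) (hinit : QWInit α β ψ) (hevol : QWEvolves U ψ) (t : ℕ) :
    IsProbabilityMeasure (qwMeasure ψ t) := by
  have h : charFun (qwMeasure ψ t) 0 = 1 := by
    rw [hevol.charFun_qwMeasure hinit]
    simp_rw [zero_div, sub_zero, inner_self_eq_norm_sq_to_K, hevol.norm_qwFourier hU hinit, hv]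
    have : (π : ℂ) ≠ 0 := Complex.ofReal_ne_zero.2 Real.pi_ne_zero
    simp only [RCLike.ofReal_one, one_pow, intervalIntegral.integral_const, real_smul]
    push_cast
    field_simp
    norm_num
  rw [charFun_zero] at h
  exact isProbabilityMeasure_iff_real.2 (Complex.ofReal_injective h)

lemma QWEvolves.tendsto_charFun_qwMeasure (hU : ∀ t, U t ∈ Matrix.unitaryGroup (Fin 2) ℂ)
    (hinit : QWInit α β ψ) (hevol : QWEvolves U ψ) {ξ : ℝ} {F : ℝ → ℂ}
    (hF : ∀ k, Tendsto (fun t : ℕ => ⟪qwFourier ψ t k, qwFourier ψ t (k - ξ / t)⟫_ℂ) atTop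
      (𝓝 (F k))) :
    Tendsto (fun t => charFun (qwMeasure ψ t) ξ) atTop
      (𝓝 ((2 * π : ℂ)⁻¹ * ∫ k in -π..π, F k)) := by
  simp_rw [hevol.charFun_qwMeasure hinit]
  refine Tendsto.const_mul _ (intervalIntegral.tendsto_integral_filter_of_dominated_convergence
    (fun _ => ‖(!₂[α, β] : CoinSpace)‖ ^ 2) (.of_forall fun t => ?_)
    (.of_forall fun t => .of_forall fun k _ => ?_) intervalIntegrable_const
    (.of_forall fun k _ => hF k))
  · have hc := hevol.continuous_qwFourier hinit t
    exact Continuous.aestronglyMeasurable (by fun_prop)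
  · rw [sq]
    refine (norm_inner_le_norm _ _).trans_eq ?_
    rw [hevol.norm_qwFourier hU hinit, hevol.norm_qwFourier hU hinit]

end Walk

/-! ### Autocorrelation of modes -/

section Modes

variable {E : Type*} [NormedAddCommGroup E] [InnerProductSpace ℂ E] {k τ : ℝ} {d : ℕ → ℝ}

lemma tendsto_zero_of_tendsto_natCast_mul
    (hd : Tendsto (fun n : ℕ => n * d n) atTop (𝓝 τ)) : Tendsto d atTop (𝓝 0) := by
  refine (hd.div_atTop tendsto_natCast_atTop_atTop).congr' ?_
  filter_upwards [eventually_ne_atTop 0] with n hn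
  exact mul_div_cancel_left₀ _ (Nat.cast_ne_zero.2 hn)

lemma tendsto_natCast_mul_sub_of_hasDerivAt {θ : ℝ → ℝ} {θ' : ℝ} (hθ : HasDerivAt θ θ' k)
    (hd : Tendsto (fun n : ℕ => n * d n) atTop (𝓝 τ)) :
    Tendsto (fun n : ℕ => n * (θ (k + d n) - θ k)) atTop (𝓝 (τ * θ')) := by
  simpa using hθ.hasFDerivAt.hasFDerivWithinAt.lim (s := Set.univ)
    (tendsto_zero_of_tendsto_natCast_mul hd) (.of_forall fun _ => Set.mem_univ _) hd

lemma inner_exp_I_mul_smul (x y : ℝ) (v w : E) :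
    ⟪cexp (I * x) • v, cexp (I * y) • w⟫_ℂ = cexp (I * (y - x : ℝ)) * ⟪v, w⟫_ℂ := by
  rw [inner_smul_left, inner_smul_right, ← Complex.exp_conj, ← mul_assoc, ← Complex.exp_add]
  congr 2
  simp only [map_mul, conj_I, conj_ofReal]
  push_cast
  ring

/-- The diagonal terms see only the group velocities `θ' j`, and the oscillating cross terms
disappear by orthogonality. -/
lemma tendsto_inner_sum_modes {ι : Type*} [Fintype ι] {θ : ι → ℝ → ℝ} {θ' : ι → ℝ}
    {p : ι → ℝ → E} (hθ : ∀ j, HasDerivAt (θ j) (θ' j) k) (hp : ∀ j, ContinuousAt (p j) k)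
    (horth : Pairwise fun i j => ⟪p i k, p j k⟫_ℂ = 0)
    (hd : Tendsto (fun n : ℕ => n * d n) atTop (𝓝 τ)) :
    Tendsto (fun n : ℕ => ⟪∑ j, cexp (I * (n * θ j k : ℝ)) • p j k,
        ∑ j, cexp (I * (n * θ j (k + d n) : ℝ)) • p j (k + d n)⟫_ℂ) atTop
      (𝓝 (∑ j, cexp (I * (τ * θ' j : ℝ)) * ‖p j k‖ ^ 2)) := by
  classical
  have hk : Tendsto (fun n => k + d n) atTop (𝓝 k) := by
    simpa using (tendsto_zero_of_tendsto_natCast_mul hd).const_add k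
  have hinner (i j : ι) :
      Tendsto (fun n => ⟪p i k, p j (k + d n)⟫_ℂ) atTop (𝓝 ⟪p i k, p j k⟫_ℂ) :=
    tendsto_const_nhds.inner ((hp j).tendsto.comp hk)
  have hterm (i j : ι) : Tendsto (fun n : ℕ =>
      cexp (I * (n * θ j (k + d n) - n * θ i k : ℝ)) * ⟪p i k, p j (k + d n)⟫_ℂ) atTop
      (𝓝 (if i = j then cexp (I * (τ * θ' j : ℝ)) * ‖p j k‖ ^ 2 else 0)) := by
    split_ifs with hij
    · subst hij
      have hphase := (continuous_ofReal.tendsto _).comp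
        (tendsto_natCast_mul_sub_of_hasDerivAt (hθ i) hd)
      have hexp := (Complex.continuous_exp.tendsto _).comp (hphase.const_mul I)
      have hself : ⟪p i k, p i k⟫_ℂ = ‖p i k‖ ^ 2 := inner_self_eq_norm_sq_to_K _
      rw [← hself]
      simpa only [← mul_sub, Function.comp_def] using hexp.mul (hinner i i)
    · refine (tendsto_zero_iff_norm_tendsto_zero.2 ?_)
      simpa only [norm_mul, norm_exp_I_mul_ofReal, one_mul, horth hij, norm_zero]
        using (hinner i j).norm
  simp_rw [sum_inner, inner_sum, inner_exp_I_mul_smul]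
  simpa only [Finset.sum_ite_eq, Finset.mem_univ, if_true] using
    tendsto_finsetSum Finset.univ fun i _ => tendsto_finsetSum Finset.univ fun j _ => hterm i j

end Modes

section Projection

lemma smul_add_smul_one_sub_pow {R : Type*} [Ring R] [Algebra ℂ R] {p : R}
    (hp : IsIdempotentElem p) (x y : ℂ) (n : ℕ) :
    (x • p + y • (1 - p)) ^ n = x ^ n • p + y ^ n • (1 - p) := by
  induction n with
  | zero => simp
  | succ n ih =>
    rw [pow_succ, ih]
    simp only [add_mul, mul_add, smul_mul_smul_comm, hp.eq, hp.mul_one_sub_self,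
      hp.one_sub_mul_self, hp.one_sub.eq, smul_zero, add_zero, zero_add, ← pow_succ]

variable {H : Type*} [NormedAddCommGroup H] [InnerProductSpace ℂ H] [CompleteSpace H]

lemma inner_apply_one_sub_apply_of_isStarProjection {p : H →L[ℂ] H} (hp : IsStarProjection p)
    (v : H) : ⟪p v, (1 - p) v⟫_ℂ = 0 := by
  rw [← ContinuousLinearMap.adjoint_inner_right, hp.isSelfAdjoint.adjoint_eq,
    ← mul_apply_eq_comp, hp.isIdempotentElem.mul_one_sub_self, zero_apply, inner_zero_right]

/-- The factor `A` accounts for the incomplete last period of a periodic walk. -/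
lemma tendsto_inner_pow_of_isStarProjection {W P A : ℝ → H →L[ℂ] H} {θ ω : ℝ → ℝ}
    {k θ' ω' τ : ℝ} {d : ℕ → ℝ} (hP : ∀ k, IsStarProjection (P k))
    (hW : ∀ k, W k = cexp (I * θ k) • P k + cexp (I * ω k) • (1 - P k))
    (hA : A k ∈ unitary (H →L[ℂ] H)) (hPk : ContinuousAt P k) (hAk : ContinuousAt A k)
    (hθ : HasDerivAt θ θ' k) (hω : HasDerivAt ω ω' k)
    (hd : Tendsto (fun n : ℕ => n * d n) atTop (𝓝 τ)) (v : H) :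
    Tendsto (fun n => ⟪A k ((W k ^ n) v), A (k + d n) ((W (k + d n) ^ n) v)⟫_ℂ) atTop
      (𝓝 (cexp (I * (τ * θ' : ℝ)) * ‖P k v‖ ^ 2 +
        cexp (I * (τ * ω' : ℝ)) * ‖(1 - P k) v‖ ^ 2)) := by
  have hcross : ⟪A k (P k v), A k ((1 - P k) v)⟫_ℂ = 0 := by
    rw [ContinuousLinearMap.inner_map_map_of_mem_unitary hA,
      inner_apply_one_sub_apply_of_isStarProjection (hP k)]
  have key := tendsto_inner_sum_modes (θ := ![θ, ω]) (θ' := ![θ', ω'])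
    (p := ![fun k => A k (P k v), fun k => A k ((1 - P k) v)]) (k := k)
    (Fin.forall_fin_two.2 ⟨hθ, hω⟩)
    (Fin.forall_fin_two.2 ⟨hAk.clm_apply (hPk.clm_apply continuousAt_const),
      hAk.clm_apply ((continuousAt_const.sub hPk).clm_apply continuousAt_const)⟩)
    (fun i j hij => by
      fin_cases i <;> fin_cases j
      · exact absurd rfl hij
      · exact hcross
      · exact inner_eq_zero_symm.1 hcross
      · exact absurd rfl hij) hd
  have hpow (n : ℕ) (k : ℝ) : A k ((W k ^ n) v) = cexp (I * (n * θ k : ℝ)) • A k (P k v) +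
      cexp (I * (n * ω k : ℝ)) • A k ((1 - P k) v) := by
    rw [hW, smul_add_smul_one_sub_pow (hP k).isIdempotentElem, ← Complex.exp_nat_mul,
      ← Complex.exp_nat_mul]
    simp only [add_apply, smul_apply, map_add, map_smul]
    push_cast
    simp only [mul_left_comm I]
  simp only [Fin.sum_univ_two, Matrix.cons_val_zero, Matrix.cons_val_one, ← hpow,
    ContinuousLinearMap.norm_map_of_mem_unitary hA] at key
  exact key

lemma exp_I_mul_ofReal_eq_cos_add_sin_mul_I (x : ℝ) :
    cexp (I * x) = Real.cos x + Real.sin x * I := by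
  rw [mul_comm, Complex.exp_mul_I, ofReal_cos, ofReal_sin]

lemma isStarProjection_half_smul_one_add {R : Type*} [Ring R] [StarRing R] [Algebra ℂ R]
    [StarModule ℂ R] {j : R} (hsa : IsSelfAdjoint j) (hj : j * j = 1) :
    IsStarProjection ((2⁻¹ : ℂ) • (1 + j)) where
  isIdempotentElem := by
    rw [IsIdempotentElem, smul_mul_smul_comm, add_mul, mul_add, mul_add, hj, one_mul, one_mul,
      mul_one, add_comm j 1, ← two_smul ℂ (1 + j), smul_smul]
    norm_num
  isSelfAdjoint := by
    rw [IsSelfAdjoint, star_smul, star_add, star_one, hsa.star_eq]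
    simp

lemma exp_I_mul_smul_add_exp_I_mul_pi_sub_smul {R : Type*} [Ring R] [Algebra ℂ R] (θ : ℝ) (j : R) :
    cexp (I * θ) • (2⁻¹ : ℂ) • (1 + j) +
      cexp (I * (π - θ : ℝ)) • (1 - (2⁻¹ : ℂ) • (1 + j)) =
    (Real.cos θ : ℂ) • j + (I * Real.sin θ) • 1 := by
  rw [exp_I_mul_ofReal_eq_cos_add_sin_mul_I, exp_I_mul_ofReal_eq_cos_add_sin_mul_I,
    Real.cos_pi_sub, Real.sin_pi_sub, ofReal_neg]
  module

lemma norm_sq_half_smul_one_add {J : H →L[ℂ] H} (hsa : IsSelfAdjoint J) (hJ : J * J = 1) (v : H) :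
    (‖((2⁻¹ : ℂ) • (1 + J)) v‖ ^ 2 : ℂ) = 2⁻¹ * (‖v‖ ^ 2 + ⟪v, J v⟫_ℂ) := by
  have hp := isStarProjection_half_smul_one_add hsa hJ
  have hinner (w : H) : ⟪w, w⟫_ℂ = ‖w‖ ^ 2 := inner_self_eq_norm_sq_to_K _
  rw [← hinner, ← ContinuousLinearMap.adjoint_inner_right, hp.isSelfAdjoint.adjoint_eq,
    ← mul_apply_eq_comp, hp.isIdempotentElem.eq, smul_apply, inner_smul_right, add_apply,
    inner_add_right, one_apply_eq_self, hinner]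

/-- The eigenvalues of `W k` are `exp (iθ)` and `exp (i(π - θ))`, with opposite group velocities. -/
lemma tendsto_inner_pow_of_reflection {W J A : ℝ → H →L[ℂ] H} {θ : ℝ → ℝ}
    {k θ' τ : ℝ} {d : ℕ → ℝ} (hsa : ∀ k, IsSelfAdjoint (J k)) (hJ : ∀ k, J k * J k = 1)
    (hW : ∀ k, W k = (Real.cos (θ k) : ℂ) • J k + (I * Real.sin (θ k)) • 1)
    (hA : A k ∈ unitary (H →L[ℂ] H)) (hJk : ContinuousAt J k) (hAk : ContinuousAt A k)
    (hθ : HasDerivAt θ θ' k) (hd : Tendsto (fun n : ℕ => n * d n) atTop (𝓝 τ)) (v : H) :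
    Tendsto (fun n => ⟪A k ((W k ^ n) v), A (k + d n) ((W (k + d n) ^ n) v)⟫_ℂ) atTop
      (𝓝 (Real.cos (τ * θ') * ‖v‖ ^ 2 + I * Real.sin (τ * θ') * ⟪v, J k v⟫_ℂ)) := by
  have hP (k : ℝ) := isStarProjection_half_smul_one_add (hsa k) (hJ k)
  have hPk : ContinuousAt (fun k => (2⁻¹ : ℂ) • (1 + J k)) k := by
    fun_prop
  have hPQ : 1 - (2⁻¹ : ℂ) • (1 + J k) = (2⁻¹ : ℂ) • (1 + -J k) := by module
  convert tendsto_inner_pow_of_isStarProjection hP (ω := fun k => π - θ k)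
    (fun k => (hW k).trans (exp_I_mul_smul_add_exp_I_mul_pi_sub_smul _ _).symm) hA hPk hAk hθ
    (hθ.const_sub π) hd v using 2
  rw [hPQ, norm_sq_half_smul_one_add (hsa k) (hJ k),
    norm_sq_half_smul_one_add (hsa k).neg (by rw [neg_mul_neg, hJ]), neg_apply, inner_neg_right,
    mul_neg τ, exp_I_mul_ofReal_eq_cos_add_sin_mul_I, exp_I_mul_ofReal_eq_cos_add_sin_mul_I,
    Real.cos_neg, Real.sin_neg, ofReal_neg]
  ring

end Projection

/-! ### Unitary matrices of determinant `-1` -/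

section DetNegOne

variable {M : Matrix (Fin 2) (Fin 2) ℂ} {s : ℝ}

lemma star_eq_sub_trace_smul_one_of_det_eq_neg_one (hM : M ∈ Matrix.unitaryGroup (Fin 2) ℂ)
    (hdet : M.det = -1) : star M = M - M.trace • 1 := by
  have hadj : star M = -M.adjugate := by
    rw [← one_mul M.adjugate, ← Matrix.mem_unitaryGroup_iff'.1 hM, mul_assoc, Matrix.mul_adjugate,
      hdet, neg_one_smul, mul_neg, mul_one, neg_neg]
  rw [hadj, Matrix.adjugate_fin_two]
  ext i j
  fin_cases i <;> fin_cases j <;> simp [Matrix.trace_fin_two]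

/-- The normalized traceless part of a unitary matrix `M` with determinant `-1` and trace `2is`:
the reflection `J` with `M = cos θ • J + (i sin θ) • 1` for `θ = arcsin s`. -/
def arcsinReflection (M : Matrix (Fin 2) (Fin 2) ℂ) (s : ℝ) : Matrix (Fin 2) (Fin 2) ℂ :=
  (√(1 - s ^ 2) : ℂ)⁻¹ • (M - (I * s : ℂ) • 1)

lemma isSelfAdjoint_arcsinReflection (hM : M ∈ Matrix.unitaryGroup (Fin 2) ℂ)
    (hdet : M.det = -1) (htr : M.trace = 2 * (I * s)) : IsSelfAdjoint (arcsinReflection M s) := by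
  refine .smul (by simp [IsSelfAdjoint]) ?_
  have hI : star (I * s : ℂ) = -(I * s) := by simp
  rw [IsSelfAdjoint, star_sub, star_smul, star_one, hI,
    star_eq_sub_trace_smul_one_of_det_eq_neg_one hM hdet, htr]
  module

lemma sub_smul_one_mul_self_of_det_eq_neg_one (hM : M ∈ Matrix.unitaryGroup (Fin 2) ℂ)
    (hdet : M.det = -1) (htr : M.trace = 2 * (I * s)) :
    (M - (I * s : ℂ) • 1) * (M - (I * s : ℂ) • 1) = (1 - s ^ 2 : ℂ) • 1 := by
  have hmul : M * M = (2 * (I * s) : ℂ) • M + 1 := by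
    have h := Matrix.mem_unitaryGroup_iff.1 hM
    rw [star_eq_sub_trace_smul_one_of_det_eq_neg_one hM hdet, htr, mul_sub, mul_smul_comm,
      mul_one] at h
    rw [← h, add_sub_cancel]
  have hsq : (I * s : ℂ) * (I * s) = -s ^ 2 := by rw [mul_mul_mul_comm, I_mul_I, sq]; ring
  rw [sub_mul, mul_sub, mul_sub, hmul, smul_mul_smul_comm, hsq, smul_mul_assoc, mul_smul_comm,
    one_mul, mul_one, mul_one]
  module

lemma arcsinReflection_mul_self (hM : M ∈ Matrix.unitaryGroup (Fin 2) ℂ) (hdet : M.det = -1)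
    (htr : M.trace = 2 * (I * s)) (hs : s ^ 2 < 1) :
    arcsinReflection M s * arcsinReflection M s = 1 := by
  have hsq : (√(1 - s ^ 2) : ℂ)⁻¹ * (√(1 - s ^ 2) : ℂ)⁻¹ * (1 - s ^ 2) = 1 := by
    norm_cast
    rw [← mul_inv, Real.mul_self_sqrt (sub_pos.2 hs).le, inv_mul_cancel₀ (sub_pos.2 hs).ne']
  rw [arcsinReflection, smul_mul_smul_comm, sub_smul_one_mul_self_of_det_eq_neg_one hM hdet htr,
    smul_smul, hsq, one_smul]

lemma cos_arcsin_smul_arcsinReflection_add (M : Matrix (Fin 2) (Fin 2) ℂ) (hs : s ^ 2 < 1) :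
    (Real.cos (Real.arcsin s) : ℂ) • arcsinReflection M s + (I * Real.sin (Real.arcsin s)) • 1 =
      M := by
  have hlt := abs_lt.1 ((sq_lt_one_iff_abs_lt_one _).1 hs)
  have hne : (√(1 - s ^ 2) : ℂ) ≠ 0 := ofReal_ne_zero.2 (Real.sqrt_pos.2 (sub_pos.2 hs)).ne'
  rw [Real.cos_arcsin, Real.sin_arcsin hlt.1.le hlt.2.le, arcsinReflection, smul_smul,
    mul_inv_cancel₀ hne, one_smul, sub_add_cancel]

lemma inner_coinOp_arcsinReflection (M : Matrix (Fin 2) (Fin 2) ℂ) (s : ℝ) (v : CoinSpace) :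
    ⟪v, coinOp (arcsinReflection M s) v⟫_ℂ =
      (⟪v, coinOp M v⟫_ℂ - I * s * ‖v‖ ^ 2) / √(1 - s ^ 2) := by
  have hself : ⟪v, v⟫_ℂ = ‖v‖ ^ 2 := inner_self_eq_norm_sq_to_K _
  rw [arcsinReflection, map_smul, map_sub, map_smul, map_one, smul_apply, inner_smul_right,
    sub_apply, inner_sub_right, smul_apply, inner_smul_right, one_apply_eq_self, hself,
    inv_mul_eq_div]

lemma tendsto_inner_coinOp_pow_of_det_eq_neg_one {M : ℝ → Matrix (Fin 2) (Fin 2) ℂ}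
    {A : ℝ → CoinSpace →L[ℂ] CoinSpace} {S : ℝ → ℝ} {k S' τ : ℝ} {d : ℕ → ℝ}
    (hM : ∀ k, M k ∈ Matrix.unitaryGroup (Fin 2) ℂ) (hdet : ∀ k, (M k).det = -1)
    (htr : ∀ k, (M k).trace = 2 * (I * S k)) (hS1 : ∀ k, S k ^ 2 < 1)
    (hA : A k ∈ unitary (CoinSpace →L[ℂ] CoinSpace))
    (hMk : ContinuousAt (fun k => coinOp (M k)) k) (hAk : ContinuousAt A k)
    (hS : HasDerivAt S S' k) (hd : Tendsto (fun n : ℕ => n * d n) atTop (𝓝 τ)) (v : CoinSpace) :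
    Tendsto (fun n => ⟪A k ((coinOp (M k) ^ n) v),
        A (k + d n) ((coinOp (M (k + d n)) ^ n) v)⟫_ℂ) atTop
      (𝓝 (Real.cos (τ * (S' / √(1 - S k ^ 2))) * ‖v‖ ^ 2 +
        I * Real.sin (τ * (S' / √(1 - S k ^ 2))) *
          ((⟪v, coinOp (M k) v⟫_ℂ - I * S k * ‖v‖ ^ 2) / √(1 - S k ^ 2)))) := by
  have hlt := abs_lt.1 ((sq_lt_one_iff_abs_lt_one _).1 (hS1 k))
  have hSk := hS.continuousAt
  have hJk : ContinuousAt (fun k => coinOp (arcsinReflection (M k) (S k))) k := by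
    have hne : (√(1 - S k ^ 2) : ℂ) ≠ 0 :=
      ofReal_ne_zero.2 (Real.sqrt_pos.2 (sub_pos.2 (hS1 k))).ne'
    simp only [arcsinReflection, map_smul, map_sub, map_one]
    fun_prop (disch := assumption)
  rw [← inner_coinOp_arcsinReflection]
  convert tendsto_inner_pow_of_reflection
    (fun k => (isSelfAdjoint_arcsinReflection (hM k) (hdet k) (htr k)).map coinOp)
    (fun k => by
      rw [← map_mul, arcsinReflection_mul_self (hM k) (hdet k) (htr k) (hS1 k), map_one])
    (fun k => by
      rw [← map_smul, ← map_one coinOp, ← map_smul, ← map_add,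
        Function.comp_apply, cos_arcsin_smul_arcsinReflection_add (M k) (hS1 k)])
    hA hJk hAk ((Real.hasDerivAt_arcsin hlt.1.ne' hlt.2.ne).comp k hS) hd v using 5 <;>
  rw [one_div_mul_eq_div]

end DetNegOne

/-! ### Two-period orthogonal coins -/

section TwoPeriod

/-- The real orthogonal coin with first row `(a, b)` and determinant `δ`, where `δ = ±1` and
`a ^ 2 + b ^ 2 = 1`. -/
def orthCoin (a b δ : ℝ) : Matrix (Fin 2) (Fin 2) ℂ :=
  !![(a : ℂ), (b : ℂ); -(δ * b), δ * a]

/-- The two-step evolution in momentum space for the coins `C₀`, `C₁`. -/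
def twoStep (C₀ C₁ : Matrix (Fin 2) (Fin 2) ℂ) (k : ℝ) : Matrix (Fin 2) (Fin 2) ℂ :=
  Rmat k * C₁ * (Rmat k * C₀)

section Real

variable {a b c d : ℝ}

lemma ofReal_eq_orthCoin_det
    (h : Matrix.transpose (!![a, b; c, d] : Matrix (Fin 2) (Fin 2) ℝ) * !![a, b; c, d] = 1) :
    !![(a : ℂ), (b : ℂ); (c : ℂ), (d : ℂ)] = orthCoin a b (!![a, b; c, d] : Matrix _ _ ℝ).det := by
  have hadj : (!![a, b; c, d]).adjugate = (!![a, b; c, d]).det • (!![a, b; c, d]).transpose := by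
    rw [← one_mul (Matrix.adjugate _), ← h, mul_assoc, Matrix.mul_adjugate, mul_smul_comm, mul_one]
  rw [Matrix.adjugate_fin_two_of] at hadj
  have hd : d = (!![a, b; c, d]).det * a := congrFun (congrFun hadj 0) 0
  have hc : -c = (!![a, b; c, d]).det * b := congrFun (congrFun hadj 1) 0
  rw [orthCoin, ← ofReal_mul, ← ofReal_mul, ← ofReal_neg, ← hc, ← hd, neg_neg]

lemma det_sq_eq_one_of_transpose_mul_self_eq_one {M : Matrix (Fin 2) (Fin 2) ℝ}
    (h : M.transpose * M = 1) : M.det ^ 2 = 1 := by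
  nth_rw 1 [sq, ← Matrix.det_transpose]
  rw [← Matrix.det_mul, h, Matrix.det_one]

lemma sq_add_sq_eq_one_of_transpose_mul_self_eq_one
    (h : Matrix.transpose (!![a, b; c, d] : Matrix (Fin 2) (Fin 2) ℝ) * !![a, b; c, d] = 1) :
    a ^ 2 + b ^ 2 = 1 := by
  have h' := mul_eq_one_comm.1 h
  have h00 := congrFun (congrFun h' 0) 0
  rw [Matrix.mul_apply] at h00
  simpa [Fin.sum_univ_two, sq] using h00

end Real

variable {a b δ a₀ b₀ a₁ b₁ : ℝ}

lemma orthCoin_mem_unitaryGroup (hδ : δ ^ 2 = 1) (hab : a ^ 2 + b ^ 2 = 1) :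
    orthCoin a b δ ∈ Matrix.unitaryGroup (Fin 2) ℂ := by
  rw [Matrix.mem_unitaryGroup_iff']
  ext i j
  fin_cases i <;> fin_cases j <;>
    simp [orthCoin, Matrix.star_eq_conjTranspose, Matrix.mul_apply] <;> norm_cast <;> grind

lemma det_orthCoin (hab : a ^ 2 + b ^ 2 = 1) : (orthCoin a b δ).det = δ := by
  rw [orthCoin, Matrix.det_fin_two_of]
  norm_cast
  linear_combination δ * hab

lemma det_Rmat (k : ℝ) : (Rmat k).det = 1 := by
  rw [Rmat, Matrix.det_fin_two_of, ← Complex.exp_add, add_neg_cancel, Complex.exp_zero, mul_zero,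
    sub_zero]

lemma det_twoStep (C₀ C₁ : Matrix (Fin 2) (Fin 2) ℂ) (k : ℝ) :
    (twoStep C₀ C₁ k).det = C₁.det * C₀.det := by
  simp only [twoStep, Matrix.det_mul, det_Rmat, one_mul]

lemma twoStep_mem_unitaryGroup {C₀ C₁ : Matrix (Fin 2) (Fin 2) ℂ}
    (h₀ : C₀ ∈ Matrix.unitaryGroup (Fin 2) ℂ) (h₁ : C₁ ∈ Matrix.unitaryGroup (Fin 2) ℂ) (k : ℝ) :
    twoStep C₀ C₁ k ∈ Matrix.unitaryGroup (Fin 2) ℂ :=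
  mul_mem (mul_mem (Rmat_mem_unitaryGroup k) h₁) (mul_mem (Rmat_mem_unitaryGroup k) h₀)

lemma continuous_Rmat : Continuous Rmat := by
  unfold Rmat
  fun_prop

lemma continuous_coinOp : Continuous coinOp :=
  LinearMap.continuous_of_finiteDimensional
    (coinOp : Matrix (Fin 2) (Fin 2) ℂ →ₗ[ℂ] CoinSpace →L[ℂ] CoinSpace)

lemma continuous_twoStep (C₀ C₁ : Matrix (Fin 2) (Fin 2) ℂ) : Continuous (twoStep C₀ C₁) :=
  (continuous_Rmat.matrix_mul continuous_const).matrix_mul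
    (continuous_Rmat.matrix_mul continuous_const)

lemma twoStep_orthCoin_neg (hδ : δ ^ 2 = 1) (k : ℝ) :
    twoStep (orthCoin a₀ b₀ δ) (orthCoin a₁ b₁ (-δ)) k =
      !![a₀ * a₁ * cexp (I * (2 * k : ℝ)) - δ * b₀ * b₁,
          a₁ * b₀ * cexp (I * (2 * k : ℝ)) + δ * a₀ * b₁;
        a₁ * b₀ * cexp (I * (-(2 * k) : ℝ)) + δ * a₀ * b₁,
          δ * b₀ * b₁ - a₀ * a₁ * cexp (I * (-(2 * k) : ℝ))] := by
  have hδ' : (δ : ℂ) ^ 2 = 1 := mod_cast hδ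
  have hpos : cexp (I * (2 * k : ℝ)) = cexp (I * k) ^ 2 := by
    rw [← Complex.exp_nat_mul]; push_cast; ring_nf
  have hneg : cexp (I * (-(2 * k) : ℝ)) = cexp (-(I * k)) ^ 2 := by
    rw [← Complex.exp_nat_mul]; push_cast; ring_nf
  have hone : cexp (I * k) * cexp (-(I * k)) = 1 := by
    rw [← Complex.exp_add, add_neg_cancel, Complex.exp_zero]
  rw [hpos, hneg]
  ext i j
  fin_cases i <;> fin_cases j <;> simp [twoStep, Rmat, orthCoin]
  · linear_combination (-δ * b₀ * b₁ : ℂ) * hone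
  · linear_combination (δ * a₀ * b₁ : ℂ) * hone
  · linear_combination (δ * a₀ * b₁ : ℂ) * hone + a₁ * b₀ * cexp (-(I * k)) ^ 2 * hδ'
  · linear_combination (δ * b₀ * b₁ : ℂ) * hone - a₀ * a₁ * cexp (-(I * k)) ^ 2 * hδ'

lemma trace_twoStep_orthCoin_neg (hδ : δ ^ 2 = 1) (k : ℝ) :
    (twoStep (orthCoin a₀ b₀ δ) (orthCoin a₁ b₁ (-δ)) k).trace =
      2 * (I * (a₀ * a₁ * Real.sin (2 * k) : ℝ)) := by
  rw [twoStep_orthCoin_neg hδ, Matrix.trace_fin_two_of, exp_I_mul_ofReal_eq_cos_add_sin_mul_I,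
    exp_I_mul_ofReal_eq_cos_add_sin_mul_I, Real.cos_neg, Real.sin_neg]
  push_cast
  ring

lemma inner_coinOp_twoStep_orthCoin_neg (hδ : δ ^ 2 = 1) (k : ℝ) (α β : ℂ) :
    ⟪(!₂[α, β] : CoinSpace),
        coinOp (twoStep (orthCoin a₀ b₀ δ) (orthCoin a₁ b₁ (-δ)) k) !₂[α, β]⟫_ℂ -
      I * (a₀ * a₁ * Real.sin (2 * k) : ℝ) * ‖(!₂[α, β] : CoinSpace)‖ ^ 2 =
    (((normSq α - normSq β) * a₀ + 2 * (conj α * β).re * b₀) * a₁ * Real.cos (2 * k) +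
      δ * (2 * (conj α * β).re * a₀ - (normSq α - normSq β) * b₀) * b₁ -
      2 * (conj α * β).im * a₁ * b₀ * Real.sin (2 * k) : ℝ) := by
  have hnorm : (‖(!₂[α, β] : CoinSpace)‖ ^ 2 : ℂ) = (normSq α + normSq β : ℝ) := by
    norm_cast
    simp [EuclideanSpace.norm_sq_eq, normSq_eq_norm_sq]
  rw [hnorm, twoStep_orthCoin_neg hδ, exp_I_mul_ofReal_eq_cos_add_sin_mul_I,
    exp_I_mul_ofReal_eq_cos_add_sin_mul_I, Real.cos_neg, Real.sin_neg]
  apply Complex.ext <;>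
    simp [Matrix.toEuclideanCLM_toLp, PiLp.inner_apply, normSq_apply] <;> ring

/-- The slope `c` of the factor `1 - c * x` by which the limit density differs from the Konno
density. -/
def konnoSlope (a₀ b₀ : ℝ) (α β : ℂ) : ℝ :=
  normSq α - normSq β + 2 * (conj α * β).re * b₀ / a₀

/-- The mean `⟪v, J v⟫` of the reflection `J` associated with the two-step evolution at momentum
`φ / 2`, as a function of the product `a` of the diagonal coin entries and of coefficients
determined by the initial state `v`. -/
def reflectionMean (a c e₀ e₁ φ : ℝ) : ℝ :=
  (c * a * Real.cos φ + e₀ + e₁ * Real.sin φ) / √(1 - (a * Real.sin φ) ^ 2)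

/-- The limit of the overlap of the state at time `t` and momentum `φ / 2` with its translate by
`ξ / t`, in terms of the coefficients of `reflectionMean`. -/
def limitOverlap (a c e₀ e₁ ξ φ : ℝ) : ℂ :=
  Real.cos (ξ * konnoVelocity a φ) -
    I * Real.sin (ξ * konnoVelocity a φ) * reflectionMean a c e₀ e₁ φ

lemma inner_sub_div_eq_reflectionMean (h0 : a₀ ≠ 0) (hδ : δ ^ 2 = 1) (k : ℝ) (α β : ℂ) :
    (⟪(!₂[α, β] : CoinSpace),
        coinOp (twoStep (orthCoin a₀ b₀ δ) (orthCoin a₁ b₁ (-δ)) k) !₂[α, β]⟫_ℂ -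
      I * (a₀ * a₁ * Real.sin (2 * k) : ℝ) * ‖(!₂[α, β] : CoinSpace)‖ ^ 2) /
        √(1 - (a₀ * a₁ * Real.sin (2 * k)) ^ 2) =
    reflectionMean (a₀ * a₁) (konnoSlope a₀ b₀ α β)
      (δ * (2 * (conj α * β).re * a₀ - (normSq α - normSq β) * b₀) * b₁)
      (-(2 * (conj α * β).im * a₁ * b₀)) (2 * k) := by
  have hslope : konnoSlope a₀ b₀ α β * (a₀ * a₁) =
      ((normSq α - normSq β) * a₀ + 2 * (conj α * β).re * b₀) * a₁ := by
    rw [konnoSlope]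
    field_simp
  rw [inner_coinOp_twoStep_orthCoin_neg hδ, ← ofReal_div, reflectionMean, hslope, neg_mul,
    ← sub_eq_add_neg]

lemma tendsto_inner_twoStep_pow {A : ℝ → CoinSpace →L[ℂ] CoinSpace} {d : ℕ → ℝ} {k ξ : ℝ} {α β : ℂ}
    (h0 : a₀ ≠ 0) (ha : (a₀ * a₁) ^ 2 < 1) (hδ : δ ^ 2 = 1) (h₀ : a₀ ^ 2 + b₀ ^ 2 = 1)
    (h₁ : a₁ ^ 2 + b₁ ^ 2 = 1) (hv : ‖(!₂[α, β] : CoinSpace)‖ = 1)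
    (hA : A k ∈ unitary (CoinSpace →L[ℂ] CoinSpace)) (hAk : ContinuousAt A k)
    (hd : Tendsto (fun n : ℕ => n * d n) atTop (𝓝 (-(ξ / 2)))) :
    Tendsto (fun n =>
      ⟪A k ((coinOp (twoStep (orthCoin a₀ b₀ δ) (orthCoin a₁ b₁ (-δ)) k) ^ n) !₂[α, β]),
        A (k + d n) ((coinOp (twoStep (orthCoin a₀ b₀ δ) (orthCoin a₁ b₁ (-δ)) (k + d n)) ^ n)
          !₂[α, β])⟫_ℂ) atTop
      (𝓝 (limitOverlap (a₀ * a₁) (konnoSlope a₀ b₀ α β)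
        (δ * (2 * (conj α * β).re * a₀ - (normSq α - normSq β) * b₀) * b₁)
        (-(2 * (conj α * β).im * a₁ * b₀)) ξ (2 * k))) := by
  have hS : HasDerivAt (fun k => a₀ * a₁ * Real.sin (2 * k))
      (a₀ * a₁ * (Real.cos (2 * k) * 2)) k :=
    ((hasDerivAt_const_mul 2).sin).const_mul _
  have hM (k : ℝ) := twoStep_mem_unitaryGroup (orthCoin_mem_unitaryGroup hδ h₀)
    (orthCoin_mem_unitaryGroup (δ := -δ) (by rwa [neg_sq]) h₁) k
  have hdet (k : ℝ) : (twoStep (orthCoin a₀ b₀ δ) (orthCoin a₁ b₁ (-δ)) k).det = -1 := by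
    rw [det_twoStep, det_orthCoin h₀, det_orthCoin h₁, ofReal_neg, neg_mul, ← sq, ← ofReal_pow, hδ,
      ofReal_one]
  have hMc : Continuous fun k => coinOp (twoStep (orthCoin a₀ b₀ δ) (orthCoin a₁ b₁ (-δ)) k) :=
    continuous_coinOp.comp (continuous_twoStep _ _)
  have hphase : -(ξ / 2) * (a₀ * a₁ * (Real.cos (2 * k) * 2) /
      √(1 - (a₀ * a₁ * Real.sin (2 * k)) ^ 2)) = -(ξ * konnoVelocity (a₀ * a₁) (2 * k)) := by
    rw [konnoVelocity]
    ring
  have key := tendsto_inner_coinOp_pow_of_det_eq_neg_one hM hdet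
    (fun k => trace_twoStep_orthCoin_neg hδ k)
    (fun k => sub_pos.1 (one_sub_mul_sin_sq_pos ha (2 * k))) hA hMc.continuousAt hAk
    hS hd !₂[α, β]
  rw [inner_sub_div_eq_reflectionMean h0 hδ, hphase, Real.cos_neg, Real.sin_neg, ofReal_neg,
    mul_neg, neg_mul, ← sub_eq_add_neg, hv, ofReal_one, one_pow, mul_one] at key
  exact key

end TwoPeriod

section Periodic

variable {C₀ C₁ : Matrix (Fin 2) (Fin 2) ℂ} {ψ : ℕ → ℤ → Fin 2 → ℂ} {α β : ℂ}

lemma QWEvolves.qwFourier_two_mul (hinit : QWInit α β ψ)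
    (hevol : QWEvolves (fun t => if Even t then C₀ else C₁) ψ) (n : ℕ) (k : ℝ) :
    qwFourier ψ (2 * n) k = (coinOp (twoStep C₀ C₁ k) ^ n) !₂[α, β] := by
  induction n with
  | zero => exact hinit.qwFourier_zero k
  | succ n ih =>
    have hodd : ¬Even (2 * n + 1) := by simp
    rw [mul_add_one, hevol.qwFourier_succ hinit, hevol.qwFourier_succ hinit, if_neg hodd,
      if_pos (even_two_mul n), ih, pow_succ', twoStep, map_mul coinOp (_ * _) (_ * _),
      mul_apply_eq_comp, mul_apply_eq_comp]

lemma QWEvolves.qwFourier_two_mul_add_one (hinit : QWInit α β ψ)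
    (hevol : QWEvolves (fun t => if Even t then C₀ else C₁) ψ) (n : ℕ) (k : ℝ) :
    qwFourier ψ (2 * n + 1) k =
      coinOp (Rmat k * C₀) ((coinOp (twoStep C₀ C₁ k) ^ n) !₂[α, β]) := by
  rw [hevol.qwFourier_succ hinit, if_pos (even_two_mul n), hevol.qwFourier_two_mul hinit]

end Periodic

section Overlap

variable {a₀ b₀ a₁ b₁ δ : ℝ} {ψ : ℕ → ℤ → Fin 2 → ℂ} {α β : ℂ}

lemma tendsto_of_tendsto_two_mul {X : Type*} {f : ℕ → X} {l : Filter X}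
    (heven : Tendsto (fun n => f (2 * n)) atTop l)
    (hodd : Tendsto (fun n => f (2 * n + 1)) atTop l) : Tendsto f atTop l := by
  intro s hs
  obtain ⟨N, hN⟩ := mem_atTop_sets.1 (heven hs)
  obtain ⟨M, hM⟩ := mem_atTop_sets.1 (hodd hs)
  refine mem_atTop_sets.2 ⟨2 * N + 2 * M, fun t ht => ?_⟩
  rcases Nat.even_or_odd' t with ⟨n, rfl | rfl⟩
  · exact hN n (by omega)
  · exact hM n (by omega)

lemma tendsto_natCast_mul_neg_div_two_mul_add (ξ : ℝ) (j : ℕ) :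
    Tendsto (fun n : ℕ => (n : ℝ) * -(ξ / (2 * n + j : ℕ))) atTop (𝓝 (-(ξ / 2))) := by
  have h := (tendsto_natCast_div_add_atTop (j / 2 : ℝ)).const_mul (-(ξ / 2))
  rw [mul_one] at h
  refine h.congr fun n => ?_
  have hcast : ((2 * n + j : ℕ) : ℝ) = 2 * (n + j / 2) := by push_cast; ring
  rw [hcast, ← div_div]
  ring

lemma QWEvolves.tendsto_inner_qwFourier (h0 : a₀ ≠ 0) (ha : (a₀ * a₁) ^ 2 < 1) (hδ : δ ^ 2 = 1)
    (h₀ : a₀ ^ 2 + b₀ ^ 2 = 1) (h₁ : a₁ ^ 2 + b₁ ^ 2 = 1) (hv : ‖(!₂[α, β] : CoinSpace)‖ = 1)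
    (hinit : QWInit α β ψ)
    (hevol : QWEvolves (fun t => if Even t then orthCoin a₀ b₀ δ else orthCoin a₁ b₁ (-δ)) ψ)
    (ξ k : ℝ) :
    Tendsto (fun t : ℕ => ⟪qwFourier ψ t k, qwFourier ψ t (k - ξ / t)⟫_ℂ) atTop
      (𝓝 (limitOverlap (a₀ * a₁) (konnoSlope a₀ b₀ α β)
        (δ * (2 * (conj α * β).re * a₀ - (normSq α - normSq β) * b₀) * b₁)
        (-(2 * (conj α * β).im * a₁ * b₀)) ξ (2 * k))) := by
  apply tendsto_of_tendsto_two_mul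
  · have key := tendsto_inner_twoStep_pow h0 ha hδ h₀ h₁ hv (A := fun _ => 1)
      (k := k)
      (one_mem _) continuousAt_const (tendsto_natCast_mul_neg_div_two_mul_add ξ 0)
    simpa only [hevol.qwFourier_two_mul hinit, one_apply_eq_self, sub_eq_add_neg, add_zero]
      using key
  · have key := tendsto_inner_twoStep_pow h0 ha hδ h₀ h₁ hv
      (A := fun k => coinOp (Rmat k * orthCoin a₀ b₀ δ)) (k := k)
      (coinOp_mem_unitary (mul_mem (Rmat_mem_unitaryGroup k) (orthCoin_mem_unitaryGroup hδ h₀)))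
      (continuous_coinOp.comp (continuous_Rmat.matrix_mul continuous_const)).continuousAt
      (tendsto_natCast_mul_neg_div_two_mul_add ξ 1)
    simpa only [hevol.qwFourier_two_mul_add_one hinit, sub_eq_add_neg] using key

end Overlap

/-! ### Averaging over momenta -/

section Averaging

variable {E : Type*} [NormedAddCommGroup E] [NormedSpace ℝ E] {f : ℝ → E}

lemma intervalIntegral_eq_zero_of_odd (hf : f.Odd) (b : ℝ) : ∫ x in -b..b, f x = 0 := by
  have h := intervalIntegral.integral_comp_neg (a := -b) (b := b) f
  simp only [hf _, intervalIntegral.integral_neg, neg_neg] at h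
  have : IsAddTorsionFree E := .of_isTorsionFree ℝ E
  exact self_eq_neg.1 h.symm

lemma intervalIntegral_eq_zero_of_antiperiodic {T : ℝ} (hf : Function.Antiperiodic f T) :
    ∫ x in -T..T, f x = 0 := by
  have h := intervalIntegral.integral_comp_add_right (a := -T) (b := T) f T
  have hper := hf.periodic_two_mul.intervalIntegral_add_eq (-T) 0
  simp only [hf _, intervalIntegral.integral_neg] at h
  rw [neg_add_cancel, ← two_mul, ← zero_add (2 * T), ← hper, two_mul, neg_add_cancel_left] at h
  have : IsAddTorsionFree E := .of_isTorsionFree ℝ E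
  exact self_eq_neg.1 h.symm

lemma intervalIntegral_eq_two_smul_of_even (hf : f.Even) (hc : Continuous f) (b : ℝ) :
    ∫ x in -b..b, f x = (2 : ℝ) • ∫ x in 0..b, f x := by
  have h := intervalIntegral.integral_comp_neg (a := -b) (b := 0) f
  simp only [hf _, neg_neg, neg_zero] at h
  rw [← intervalIntegral.integral_add_adjacent_intervals (hc.intervalIntegrable _ 0)
    (hc.intervalIntegrable 0 _), h, two_smul]

lemma intervalIntegral_comp_two_mul_of_periodic (hf : Function.Periodic f (2 * π))
    (hc : Continuous f) : ∫ k in -π..π, f (2 * k) = ∫ φ in -π..π, f φ := by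
  have h (t : ℝ) : ∫ x in t..t + 2 * π, f x = ∫ φ in -π..π, f φ := by
    rw [hf.intervalIntegral_add_eq t (-π)]
    ring_nf
  have hl := h (2 * -π)
  have hr := h 0
  rw [mul_neg, neg_add_cancel] at hl
  rw [zero_add] at hr
  rw [intervalIntegral.integral_comp_mul_left f two_ne_zero, mul_neg,
    ← intervalIntegral.integral_add_adjacent_intervals (hc.intervalIntegrable _ 0)
      (hc.intervalIntegrable 0 _), hl, hr, ← two_smul ℝ, inv_smul_smul₀ two_ne_zero]

end Averaging

section LimitOverlap

variable {a c e₀ e₁ ξ : ℝ}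

lemma limitOverlap_eq (a c e₀ e₁ ξ φ : ℝ) :
    limitOverlap a c e₀ e₁ ξ φ =
      (1 - c * konnoVelocity a φ) * cexp (ξ * konnoVelocity a φ * I) +
        ((c * konnoVelocity a φ) * Real.cos (ξ * konnoVelocity a φ) -
          I * Real.sin (ξ * konnoVelocity a φ) * (1 + e₀ / √(1 - (a * Real.sin φ) ^ 2))) -
        I * Real.sin (ξ * konnoVelocity a φ) *
          (e₁ * Real.sin φ / √(1 - (a * Real.sin φ) ^ 2)) := by
  rw [limitOverlap, reflectionMean, add_div, add_div, mul_assoc c, mul_div_assoc c, ← konnoVelocity,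
    ← ofReal_mul ξ, exp_mul_I, ← ofReal_cos, ← ofReal_sin]
  push_cast
  ring

lemma continuous_limitOverlap (ha : a ^ 2 < 1) : Continuous (limitOverlap a c e₀ e₁ ξ) := by
  have hV := continuous_konnoVelocity ha
  have hmean : Continuous (reflectionMean a c e₀ e₁) :=
    Continuous.div (by fun_prop) (by fun_prop) fun φ => (sqrt_one_sub_mul_sin_sq_pos ha φ).ne'
  unfold limitOverlap
  fun_prop

lemma periodic_limitOverlap : Function.Periodic (limitOverlap a c e₀ e₁ ξ) (2 * π) := fun φ => by
  simp only [limitOverlap, reflectionMean, konnoVelocity, Real.cos_add_two_pi, Real.sin_add_two_pi]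

lemma intervalIntegral_limitOverlap (ha : a ^ 2 < 1) :
    ∫ φ in -π..π, limitOverlap a c e₀ e₁ ξ φ =
      ∫ φ in -π..π, (1 - c * konnoVelocity a φ) * cexp (ξ * konnoVelocity a φ * I) := by
  have hV := continuous_konnoVelocity ha
  have hC : Continuous fun φ => ((√(1 - (a * Real.sin φ) ^ 2) : ℝ) : ℂ) := by fun_prop
  have hC0 (φ : ℝ) : ((√(1 - (a * Real.sin φ) ^ 2) : ℝ) : ℂ) ≠ 0 :=
    ofReal_ne_zero.2 (sqrt_one_sub_mul_sin_sq_pos ha φ).ne'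
  set anti : ℝ → ℂ := fun φ => (c * konnoVelocity a φ) * Real.cos (ξ * konnoVelocity a φ) -
    I * Real.sin (ξ * konnoVelocity a φ) * (1 + e₀ / √(1 - (a * Real.sin φ) ^ 2)) with hanti
  set odd : ℝ → ℂ := fun φ => I * Real.sin (ξ * konnoVelocity a φ) *
    (e₁ * Real.sin φ / √(1 - (a * Real.sin φ) ^ 2)) with hodd
  have hanti_zero : ∫ φ in -π..π, anti φ = 0 :=
    intervalIntegral_eq_zero_of_antiperiodic fun φ => by
      simp only [hanti, konnoVelocity_add_pi, Real.sin_add_pi, mul_neg, neg_sq, Real.cos_neg,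
        Real.sin_neg, ofReal_neg]
      ring
  have hodd_zero : ∫ φ in -π..π, odd φ = 0 :=
    intervalIntegral_eq_zero_of_odd (fun φ => by
      simp only [hodd, konnoVelocity_neg, Real.sin_neg, mul_neg, neg_sq, ofReal_neg, neg_div]) π
  have hanti_cont : Continuous anti := by
    have := continuous_const (y := (e₀ : ℂ)) |>.div hC hC0
    fun_prop
  have hodd_cont : Continuous odd := by
    have : Continuous fun φ : ℝ => (e₁ * Real.sin φ / √(1 - (a * Real.sin φ) ^ 2) : ℂ) :=
      Continuous.div (by fun_prop) hC hC0
    fun_prop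
  have hmain_cont : Continuous fun φ : ℝ =>
      (1 - c * konnoVelocity a φ) * cexp (ξ * konnoVelocity a φ * I) := by fun_prop
  have hsplit (φ : ℝ) : limitOverlap a c e₀ e₁ ξ φ =
      (1 - c * konnoVelocity a φ) * cexp (ξ * konnoVelocity a φ * I) + anti φ - odd φ :=
    limitOverlap_eq a c e₀ e₁ ξ φ
  simp_rw [hsplit]
  rw [intervalIntegral.integral_sub ((hmain_cont.fun_add hanti_cont).intervalIntegrable _ _)
      (hodd_cont.intervalIntegrable _ _),
    intervalIntegral.integral_add (hmain_cont.intervalIntegrable _ _)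
      (hanti_cont.intervalIntegrable _ _), hanti_zero, hodd_zero, add_zero, sub_zero]

lemma intervalIntegral_limitOverlap_two_mul (ha : a ^ 2 < 1) (h0 : a ≠ 0) :
    (2 * π : ℂ)⁻¹ * ∫ k in -π..π, limitOverlap a c e₀ e₁ ξ (2 * k) =
      ∫ x, ((konnoDensity a x * (1 - c * x) : ℝ) : ℂ) * cexp (ξ * x * I) := by
  have hV := continuous_konnoVelocity ha
  have heven : Function.Even fun φ =>
      (1 - c * konnoVelocity a φ) * cexp (ξ * konnoVelocity a φ * I) := fun φ => by
    simp only [konnoVelocity_neg]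
  have hdensity := integral_konnoDensity_smul ha h0
    fun x : ℝ => (1 - c * x) * cexp (ξ * x * I)
  rw [intervalIntegral_comp_two_mul_of_periodic periodic_limitOverlap (continuous_limitOverlap ha),
    intervalIntegral_limitOverlap ha,
    intervalIntegral_eq_two_smul_of_even heven (by fun_prop), real_smul, ofReal_ofNat, mul_inv_rev,
    mul_assoc, inv_mul_cancel_left₀ two_ne_zero, ← ofReal_inv, ← real_smul, ← hdensity]
  simp only [real_smul, ofReal_mul, ofReal_sub, ofReal_one, mul_assoc]

end LimitOverlap

/-! ### The weak limit -/

section Density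

variable {X : Type*} [MeasurableSpace X] {μ : Measure X} {f : X → ℝ}

lemma isProbabilityMeasure_withDensity_ofReal (hf0 : ∀ x, 0 ≤ f x) (hf1 : ∫ x, f x ∂μ = 1) :
    IsProbabilityMeasure (μ.withDensity fun x => ENNReal.ofReal (f x)) := by
  have hint : Integrable f μ := .of_integral_ne_zero (by rw [hf1]; exact one_ne_zero)
  refine ⟨?_⟩
  rw [withDensity_apply _ MeasurableSet.univ, Measure.restrict_univ,
    ← ofReal_integral_eq_lintegral_ofReal hint (ae_of_all _ hf0), hf1, ENNReal.ofReal_one]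

lemma integral_withDensity_ofReal {E : Type*} [NormedAddCommGroup E] [NormedSpace ℝ E]
    (hf : Measurable f) (hf0 : ∀ x, 0 ≤ f x) (g : X → E) :
    ∫ x, g x ∂μ.withDensity (fun x => ENNReal.ofReal (f x)) = ∫ x, f x • g x ∂μ := by
  rw [integral_withDensity_eq_integral_toReal_smul (by fun_prop)
    (ae_of_all _ fun _ => ENNReal.ofReal_lt_top)]
  simp only [ENNReal.toReal_ofReal (hf0 _)]

end Density

lemma qwWeakLimit_of_tendsto_charFun {ψ : ℕ → ℤ → Fin 2 → ℂ} {f : ℝ → ℝ} (hf : Measurable f)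
    (hf0 : ∀ x, 0 ≤ f x)
    (hψ : ∀ t, IsProbabilityMeasure (qwMeasure ψ t))
    (h : ∀ ξ : ℝ, Tendsto (fun t => charFun (qwMeasure ψ t) ξ) atTop
      (𝓝 (∫ x, (f x : ℂ) * cexp (ξ * x * I)))) :
    qwWeakLimit ψ f := by
  have hf1 : ∫ x, f x = 1 := by
    have h0 := h 0
    simp only [charFun_zero, probReal_univ, ofReal_zero, zero_mul, Complex.exp_zero, mul_one,
      ofReal_one] at h0
    exact_mod_cast (tendsto_nhds_unique tendsto_const_nhds h0).symm
  have hν := isProbabilityMeasure_withDensity_ofReal hf0 hf1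
  have key := ProbabilityMeasure.tendsto_of_tendsto_charFun
    (μ := fun t => ⟨qwMeasure ψ t, hψ t⟩) (μ₀ := ⟨_, hν⟩) fun ξ => by
      simpa only [ProbabilityMeasure.coe_mk, charFun_apply_real, integral_withDensity_ofReal hf hf0,
        real_smul] using h ξ
  intro g
  have hg := ProbabilityMeasure.tendsto_iff_forall_integral_tendsto.1 key g
  simpa only [ProbabilityMeasure.coe_mk, integral_withDensity_ofReal hf hf0, smul_eq_mul,
    mul_comm (f _)] using hg

section TwoPeriodLimit

variable {a₀ b₀ a₁ b₁ δ : ℝ} {ψ : ℕ → ℤ → Fin 2 → ℂ} {α β : ℂ}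

lemma mul_sq_lt_one_of_sq_add_sq_eq_one (hb : b₀ ≠ 0) (h₀ : a₀ ^ 2 + b₀ ^ 2 = 1)
    (h₁ : a₁ ^ 2 + b₁ ^ 2 = 1) : (a₀ * a₁) ^ 2 < 1 := by
  have ha₀ : a₀ ^ 2 < 1 := by linarith [pow_pos (abs_pos.2 hb) 2, sq_abs b₀]
  have ha₁ : a₁ ^ 2 ≤ 1 := by linarith [sq_nonneg b₁]
  rw [mul_pow]
  exact mul_lt_one_of_nonneg_of_lt_one_left (sq_nonneg _) ha₀ ha₁

lemma normSq_sub_sq_add_two_mul_re_sq_le (α β : ℂ) :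
    (normSq α - normSq β) ^ 2 + (2 * (conj α * β).re) ^ 2 ≤ (normSq α + normSq β) ^ 2 := by
  have h : (conj α * β).re ^ 2 ≤ normSq α * normSq β := by
    rw [← normSq_conj α, ← normSq_mul, sq, normSq_apply]
    exact le_add_of_nonneg_right (mul_self_nonneg _)
  linarith

lemma sq_konnoSlope_mul_le_one (h0 : a₀ ≠ 0) (h₀ : a₀ ^ 2 + b₀ ^ 2 = 1)
    (hαβ : normSq α + normSq β = 1) : (konnoSlope a₀ b₀ α β * a₀) ^ 2 ≤ 1 := by
  set M := normSq α - normSq β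
  set r := 2 * (conj α * β).re
  have hMr : M ^ 2 + r ^ 2 ≤ 1 := by
    simpa only [hαβ, one_pow] using normSq_sub_sq_add_two_mul_re_sq_le α β
  calc (konnoSlope a₀ b₀ α β * a₀) ^ 2
      = (M * a₀ + r * b₀) ^ 2 := by rw [konnoSlope, add_mul, div_mul_cancel₀ _ h0]
    _ = (M ^ 2 + r ^ 2) * (a₀ ^ 2 + b₀ ^ 2) - (M * b₀ - r * a₀) ^ 2 := by ring
    _ ≤ 1 := by rw [h₀, mul_one]; linarith [sq_nonneg (M * b₀ - r * a₀)]

lemma konnoSlope_mul_le_one (h0 : a₀ ≠ 0) (h₀ : a₀ ^ 2 + b₀ ^ 2 = 1)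
    (hαβ : normSq α + normSq β = 1) {x : ℝ} (hx : |x| ≤ |a₀|) : konnoSlope a₀ b₀ α β * x ≤ 1 :=
  calc konnoSlope a₀ b₀ α β * x
      ≤ |konnoSlope a₀ b₀ α β| * |x| := (le_abs_self _).trans_eq (abs_mul _ _)
    _ ≤ |konnoSlope a₀ b₀ α β| * |a₀| := by gcongr
    _ = |konnoSlope a₀ b₀ α β * a₀| := (abs_mul _ _).symm
    _ ≤ 1 := (sq_le_one_iff_abs_le_one _).1 (sq_konnoSlope_mul_le_one h0 h₀ hαβ)

lemma konnoDensity_mul_one_sub_konnoSlope_nonneg (h0 : a₀ ≠ 0) (h₀ : a₀ ^ 2 + b₀ ^ 2 = 1)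
    (ha₁ : a₁ ^ 2 ≤ 1) (hαβ : normSq α + normSq β = 1) (x : ℝ) :
    0 ≤ konnoDensity (a₀ * a₁) x * (1 - konnoSlope a₀ b₀ α β * x) := by
  by_cases hx : |x| < |a₀ * a₁|
  · have hxa : |x| ≤ |a₀| := hx.le.trans <| (abs_mul a₀ a₁).trans_le <|
      mul_le_of_le_one_right (abs_nonneg a₀) ((sq_le_one_iff_abs_le_one a₁).1 ha₁)
    exact mul_nonneg (konnoDensity_nonneg _ x)
      (sub_nonneg.2 (konnoSlope_mul_le_one h0 h₀ hαβ hxa))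
  · rw [konnoDensity, if_neg hx, zero_mul]

lemma QWEvolves.qwWeakLimit_orthCoin (ha₀ : a₀ ≠ 0) (ha₁ : a₁ ≠ 0) (ha : (a₀ * a₁) ^ 2 < 1)
    (hδ : δ ^ 2 = 1) (h₀ : a₀ ^ 2 + b₀ ^ 2 = 1) (h₁ : a₁ ^ 2 + b₁ ^ 2 = 1)
    (hαβ : normSq α + normSq β = 1) (hinit : QWInit α β ψ)
    (hevol : QWEvolves (fun t => if Even t then orthCoin a₀ b₀ δ else orthCoin a₁ b₁ (-δ)) ψ) :
    qwWeakLimit ψ fun x => konnoDensity (a₀ * a₁) x * (1 - konnoSlope a₀ b₀ α β * x) := by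
  have hv : ‖(!₂[α, β] : CoinSpace)‖ = 1 := by
    rw [EuclideanSpace.norm_eq, Fin.sum_univ_two, ← normSq_eq_norm_sq, ← normSq_eq_norm_sq]
    exact Real.sqrt_eq_one.2 hαβ
  have hU (t : ℕ) : (if Even t then orthCoin a₀ b₀ δ else orthCoin a₁ b₁ (-δ)) ∈
      Matrix.unitaryGroup (Fin 2) ℂ := by
    split_ifs
    · exact orthCoin_mem_unitaryGroup hδ h₀
    · exact orthCoin_mem_unitaryGroup (by rwa [neg_sq]) h₁
  refine qwWeakLimit_of_tendsto_charFun ((measurable_konnoDensity _).mul (by fun_prop))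
    (konnoDensity_mul_one_sub_konnoSlope_nonneg ha₀ h₀ (by linarith [sq_nonneg b₁]) hαβ)
    (isProbabilityMeasure_qwMeasure hU hv hinit hevol) fun ξ => ?_
  have hchar := tendsto_charFun_qwMeasure hU hinit hevol
    (hevol.tendsto_inner_qwFourier ha₀ ha hδ h₀ h₁ hv hinit ξ)
  rwa [intervalIntegral_limitOverlap_two_mul ha (mul_ne_zero ha₀ ha₁)] at hchar

lemma konnoSlope_eq (a₀ b₀ : ℝ) (α β : ℂ) :
    konnoSlope a₀ b₀ α β =
      normSq α - normSq β + ((α * conj β + conj α * β) * (b₀ : ℂ) / (a₀ : ℂ)).re := by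
  have h : α * conj β + conj α * β = (2 * (conj α * β).re : ℝ) := by
    apply Complex.ext <;> simp <;> ring
  rw [konnoSlope, h, ← ofReal_mul, ← ofReal_div, ofReal_re]

end TwoPeriodLimit

/-- Two-period QW with orthogonal coins, case `det(H₁H₀) < 0`:
`X_t/t ⇒ Z` with density `f_K(x; a₀a₁)·[1 − (|α|²−|β|² + (αβ̄+ᾱβ)b₀/a₀)x]`. -/
theorem two_period_QW_weak_limit_det_neg
    (a₀ b₀ c₀ d₀ a₁ b₁ c₁ d₁ : ℝ)
    (hne : a₀ ≠ 0 ∧ b₀ ≠ 0 ∧ c₀ ≠ 0 ∧ d₀ ≠ 0 ∧ a₁ ≠ 0 ∧ b₁ ≠ 0 ∧ c₁ ≠ 0 ∧ d₁ ≠ 0)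
    (horth₀ : Matrix.transpose (!![a₀, b₀; c₀, d₀] : Matrix (Fin 2) (Fin 2) ℝ) * !![a₀, b₀; c₀, d₀] = 1)
    (horth₁ : Matrix.transpose (!![a₁, b₁; c₁, d₁] : Matrix (Fin 2) (Fin 2) ℝ) * !![a₁, b₁; c₁, d₁] = 1)
    (hdet : ((!![a₁, b₁; c₁, d₁] : Matrix (Fin 2) (Fin 2) ℝ) * !![a₀, b₀; c₀, d₀]).det < 0)
    (α β : ℂ) (hαβ : Complex.normSq α + Complex.normSq β = 1)
    (ψ : ℕ → ℤ → Fin 2 → ℂ)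
    (hinit : QWInit α β ψ)
    (hevol : QWEvolves
      (fun t => if Even t then !![(a₀ : ℂ), (b₀ : ℂ); (c₀ : ℂ), (d₀ : ℂ)]
                else !![(a₁ : ℂ), (b₁ : ℂ); (c₁ : ℂ), (d₁ : ℂ)]) ψ) :
    qwWeakLimit ψ (fun x =>
      konnoDensity (a₀ * a₁) x *
        (1 - (Complex.normSq α - Complex.normSq β +
          ((α * (starRingEnd ℂ) β + (starRingEnd ℂ) α * β) * (b₀ : ℂ) / (a₀ : ℂ)).re) * x)) := by
  obtain ⟨ha₀, hb₀, -, -, ha₁, -, -, -⟩ := hne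
  set δ := (!![a₀, b₀; c₀, d₀] : Matrix (Fin 2) (Fin 2) ℝ).det with hδ
  set δ' := (!![a₁, b₁; c₁, d₁] : Matrix (Fin 2) (Fin 2) ℝ).det with hδ'
  have hδ_sq : δ ^ 2 = 1 := det_sq_eq_one_of_transpose_mul_self_eq_one horth₀
  have hδ'_sq : δ' ^ 2 = 1 := det_sq_eq_one_of_transpose_mul_self_eq_one horth₁
  have hopp : δ' = -δ := by
    rw [Matrix.det_mul, ← hδ, ← hδ'] at hdet
    exact (sq_eq_sq_iff_eq_or_eq_neg.1 (hδ'_sq.trans hδ_sq.symm)).resolve_left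
      fun h => hdet.not_ge <| by rw [h]; exact mul_self_nonneg δ
  have h₀ := sq_add_sq_eq_one_of_transpose_mul_self_eq_one horth₀
  have h₁ := sq_add_sq_eq_one_of_transpose_mul_self_eq_one horth₁
  rw [ofReal_eq_orthCoin_det horth₀, ofReal_eq_orthCoin_det horth₁, ← hδ, ← hδ', hopp] at hevol
  rw [← konnoSlope_eq]
  exact hevol.qwWeakLimit_orthCoin ha₀ ha₁ (mul_sq_lt_one_of_sq_add_sq_eq_one hb₀ h₀ h₁)
    hδ_sq h₀ h₁ hαβ hinit
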